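/- There exist ℓ ∈ ℝ and a nondecreasing continuously differentiable function φ : ℝ → ℝ such that φ(x) = g((q_ℓ * φ)(x)) for all x ∈ ℝ, lim_{x→−∞} φ(x) = 0, and lim_{x→+∞} φ(x) = 1; that is, a traveling wave with speed ℓ exists. -/

import Mathlib

open MeasureTheory Filter Topology

/-- Convolution `(q * u)(x) = ∫ q(y) u(x - y) dy`. -/
noncomputable def conv (q u : ℝ → ℝ) (x : ℝ) : ℝ := ∫ y : ℝ, q y * u (x - y)

/-- The shifted kernel `q_ℓ(x) = q(x + ℓ)`. -/
def qshift (q : ℝ → ℝ) (ℓ : ℝ) (x : ℝ) : ℝ := q (x + ℓ)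

/-- The bistable setting: a `C¹` compactly supported probability density `q`, and a
polynomial `P` (the recursion polynomial, i.e. `g` on `[0,1]`) with `P(0) = 0`, `P(1) = 1`,
`0 < P < 1` and `P' > 0` on `(0,1)`; the nonlinearity `f(x) = P(x) - x` has a unique zero
`θ ∈ (0,1)` and `f'(0) < 0`, `f'(1) < 0` (equivalently `P'(0) < 1`, `P'(1) < 1`). -/
structure BistableSetting where
  q : ℝ → ℝ
  P : Polynomial ℝ
  θ : ℝ
  hq_diff : ContDiff ℝ 1 q
  hq_supp : HasCompactSupport q
  hq_nonneg : ∀ x, 0 ≤ q x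
  hq_int : ∫ x : ℝ, q x = 1
  hP0 : P.eval 0 = 0
  hP1 : P.eval 1 = 1
  hP_range : ∀ x ∈ Set.Ioo (0 : ℝ) 1, 0 < P.eval x ∧ P.eval x < 1
  hP_mono : ∀ x ∈ Set.Ioo (0 : ℝ) 1, 0 < (Polynomial.derivative P).eval x
  hθ_mem : θ ∈ Set.Ioo (0 : ℝ) 1
  hθ_zero : P.eval θ = θ
  hθ_unique : ∀ x ∈ Set.Ioo (0 : ℝ) 1, P.eval x = x → x = θ
  hf'0 : (Polynomial.derivative P).eval 0 < 1
  hf'1 : (Polynomial.derivative P).eval 1 < 1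

/-- The nonlinearity `g`, equal to the polynomial `P` on `[0,1]` and extended linearly:
`g(x) = x + f'(0)·x` for `x < 0` and `g(x) = x + f'(1)(x-1)` for `x > 1`. -/
noncomputable def BistableSetting.g (S : BistableSetting) (x : ℝ) : ℝ :=
  if x < 0 then (Polynomial.derivative S.P).eval 0 * x
  else if x ≤ 1 then S.P.eval x
  else 1 + (Polynomial.derivative S.P).eval 1 * (x - 1)

/-- A traveling wave with speed `ℓ`: a nondecreasing `C¹` function `φ` with
`φ = g(q_ℓ * φ)`, `φ(-∞) = 0` and `φ(+∞) = 1`. -/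
structure IsTravelingWave (S : BistableSetting) (ℓ : ℝ) (φ : ℝ → ℝ) : Prop where
  mono : Monotone φ
  smooth : ContDiff ℝ 1 φ
  wave_eq : ∀ x, φ x = S.g (conv (qshift S.q ℓ) φ x)
  limit_bot : Tendsto φ atBot (𝓝 0)
  limit_top : Tendsto φ atTop (𝓝 1)

/-!
A wave of speed `ℓ` is a fixed point of the monotone map `u ↦ g ((u * μ)(· + ℓ))`, where `μ` has
density `q`. The mean of `μ` is an obstruction to speeds: integrating `u - (u * μ)(· + ℓ)` over the
line shows that a profile increasing from `θ` to `1` can be a supersolution only if `ℓ` is at most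
this mean, and reflection gives the opposite bound for profiles increasing from `0` to `θ`.

Suppose first that `g` is constant near `0` and near `1`. For every `ℓ` other than the mean, the
least supersolution above a step function then produces a supersolution or a subsolution connecting
`0` to `1`. The supremum of the speeds that admit a supersolution therefore separates, by as little
as one likes, a supersolution from a subsolution of a larger speed, and monotone iteration between
the two gives an approximate wave.

Stretching a general `g` away from `θ` by factors tending to `1` makes it constant near `0` and `1`,
and Helly's selection theorem turns the approximate waves into exact waves of one common speed `L`,
whose average at `0` can be prescribed. A wave normalized above `θ` connects `0` to `1` unless its
lower limit is `θ`, which forces `L` below the mean; one normalized below `θ` connects `0` to `1`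
unless its upper limit is `θ`, which forces `L` above the mean. Both cannot fail.
-/

/-! ### Profiles -/

/-- The state space of the wave equation: nondecreasing functions with values in `[0, 1]`. -/
structure IsProfile (u : ℝ → ℝ) : Prop where
  mono : Monotone u
  mem_Icc : ∀ x, u x ∈ Set.Icc (0 : ℝ) 1

/-- The point reflection of a profile; it exchanges the states `0` and `1`. -/
def reflect (u : ℝ → ℝ) (x : ℝ) : ℝ := 1 - u (-x)

theorem reflect_reflect (u : ℝ → ℝ) : reflect (reflect u) = u := by
  ext x
  simp [reflect]

theorem reflect_le_reflect {u v : ℝ → ℝ} (h : u ≤ v) : reflect v ≤ reflect u :=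
  fun x => sub_le_sub_left (h (-x)) 1

theorem tendsto_reflect_atBot {u : ℝ → ℝ} {a : ℝ} (h : Tendsto u atTop (𝓝 a)) :
    Tendsto (reflect u) atBot (𝓝 (1 - a)) :=
  (h.comp tendsto_neg_atBot_atTop).const_sub 1

theorem tendsto_reflect_atTop {u : ℝ → ℝ} {a : ℝ} (h : Tendsto u atBot (𝓝 a)) :
    Tendsto (reflect u) atTop (𝓝 (1 - a)) :=
  (h.comp tendsto_neg_atTop_atBot).const_sub 1

namespace IsProfile

variable {u v : ℝ → ℝ}

theorem comp_add_right (hu : IsProfile u) (s : ℝ) : IsProfile fun x => u (x + s) where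
  mono _ _ h := hu.mono (by gcongr)
  mem_Icc _ := hu.mem_Icc _

theorem sup (hu : IsProfile u) (hv : IsProfile v) : IsProfile (u ⊔ v) where
  mono := hu.mono.sup hv.mono
  mem_Icc x := ⟨le_sup_of_le_left (hu.mem_Icc x).1, sup_le (hu.mem_Icc x).2 (hv.mem_Icc x).2⟩

theorem reflect (hu : IsProfile u) : IsProfile (reflect u) where
  mono _ _ h := sub_le_sub_left (hu.mono (neg_le_neg h)) 1
  mem_Icc _ := ⟨sub_nonneg.2 (hu.mem_Icc _).2, sub_le_self _ (hu.mem_Icc _).1⟩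

theorem of_tendsto {ι : Type*} {l : Filter ι} [l.NeBot] {U : ι → ℝ → ℝ}
    (hU : ∀ i, IsProfile (U i)) (h : ∀ x, Tendsto (fun i => U i x) l (𝓝 (u x))) : IsProfile u where
  mono x y hxy := le_of_tendsto_of_tendsto' (h x) (h y) fun i => (hU i).mono hxy
  mem_Icc x := isClosed_Icc.mem_of_tendsto (h x) (.of_forall fun i => (hU i).mem_Icc x)

theorem mem_Icc_of_tendsto {ι : Type*} {l : Filter ι} [l.NeBot] {y : ι → ℝ} {a : ℝ}
    (hu : IsProfile u) (h : Tendsto (fun i => u (y i)) l (𝓝 a)) : a ∈ Set.Icc (0 : ℝ) 1 :=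
  isClosed_Icc.mem_of_tendsto h (.of_forall fun _ => hu.mem_Icc _)

theorem exists_tendsto_atBot (hu : IsProfile u) : ∃ a, Tendsto u atBot (𝓝 a) :=
  ⟨_, tendsto_atBot_ciInf hu.mono ⟨0, by rintro _ ⟨x, rfl⟩; exact (hu.mem_Icc x).1⟩⟩

theorem exists_tendsto_atTop (hu : IsProfile u) : ∃ a, Tendsto u atTop (𝓝 a) :=
  ⟨_, tendsto_atTop_ciSup hu.mono ⟨1, by rintro _ ⟨x, rfl⟩; exact (hu.mem_Icc x).2⟩⟩

theorem norm_le_one (hu : IsProfile u) (x : ℝ) : ‖u x‖ ≤ 1 := by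
  rw [Real.norm_of_nonneg (hu.mem_Icc x).1]
  exact (hu.mem_Icc x).2

theorem ae_continuousAt_sub (hu : IsProfile u) (μ : Measure ℝ) [NullSingletonClass μ] (x : ℝ) :
    ∀ᵐ z ∂μ, ContinuousAt u (x - z) := by
  have hcount : {z | ¬ContinuousAt u (x - z)}.Countable :=
    hu.mono.countable_not_continuousAt.preimage (sub_right_injective (b := x))
  filter_upwards [hcount.ae_notMem μ] with z hz using not_not.1 hz

theorem integrable_comp_sub (hu : IsProfile u) (μ : Measure ℝ) [IsFiniteMeasure μ] (x : ℝ) :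
    Integrable (fun z => u (x - z)) μ :=
  .of_mem_Icc 0 1 (hu.mono.measurable.comp (measurable_const.sub measurable_id)).aemeasurable
    (.of_forall fun _ => hu.mem_Icc _)

end IsProfile

/-! ### Moving averages -/

/-- The convolution `u * μ` of a profile with a probability measure, which plays the role of the
kernel `q(x) dx`. -/
noncomputable def movingAverage (μ : Measure ℝ) (u : ℝ → ℝ) (x : ℝ) : ℝ := ∫ z, u (x - z) ∂μ

theorem movingAverage_comp_add_right (μ : Measure ℝ) (u : ℝ → ℝ) (s x : ℝ) :
    movingAverage μ (fun y => u (y + s)) x = movingAverage μ u (x + s) := by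
  simp only [movingAverage, sub_add_eq_add_sub]

section MovingAverage

variable {μ : Measure ℝ} [IsProbabilityMeasure μ] {u v : ℝ → ℝ} {a b x : ℝ}

theorem le_movingAverage (hu : IsProfile u) (h : ∀ᵐ z ∂μ, a ≤ u (x - z)) :
    a ≤ movingAverage μ u x := by
  simpa [movingAverage] using
    integral_mono_ae (integrable_const a) (hu.integrable_comp_sub μ x) h

theorem movingAverage_le (hu : IsProfile u) (h : ∀ᵐ z ∂μ, u (x - z) ≤ a) :
    movingAverage μ u x ≤ a := by
  simpa [movingAverage] using
    integral_mono_ae (hu.integrable_comp_sub μ x) (integrable_const a) h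

theorem movingAverage_mono (hu : IsProfile u) (hv : IsProfile v) (h : u ≤ v) :
    movingAverage μ u ≤ movingAverage μ v := fun x =>
  integral_mono (hu.integrable_comp_sub μ x) (hv.integrable_comp_sub μ x) fun _ => h _

theorem IsProfile.movingAverage (hu : IsProfile u) : IsProfile (movingAverage μ u) where
  mono x y h := integral_mono (hu.integrable_comp_sub μ x) (hu.integrable_comp_sub μ y)
    fun _ => hu.mono (by gcongr)
  mem_Icc x := ⟨le_movingAverage hu (.of_forall fun _ => (hu.mem_Icc _).1),
    movingAverage_le hu (.of_forall fun _ => (hu.mem_Icc _).2)⟩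

theorem comp_sub_le_movingAverage {R : ℝ} (hR : ∀ᵐ z ∂μ, |z| ≤ R) (hu : IsProfile u) (x : ℝ) :
    u (x - R) ≤ movingAverage μ u x :=
  le_movingAverage hu <| hR.mono fun _ hz => hu.mono (by linarith [(abs_le.1 hz).2])

theorem movingAverage_le_comp_add {R : ℝ} (hR : ∀ᵐ z ∂μ, |z| ≤ R) (hu : IsProfile u) (x : ℝ) :
    movingAverage μ u x ≤ u (x + R) :=
  movingAverage_le hu <| hR.mono fun _ hz => hu.mono (by linarith [(abs_le.1 hz).1])

theorem tendsto_movingAverage {ι : Type*} {l : Filter ι} [l.IsCountablyGenerated]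
    {U : ι → ℝ → ℝ} {V : ℝ → ℝ} {y : ι → ℝ} (hU : ∀ i, IsProfile (U i))
    (h : ∀ᵐ z ∂μ, Tendsto (fun i => U i (y i - z)) l (𝓝 (V z))) :
    Tendsto (fun i => movingAverage μ (U i) (y i)) l (𝓝 (∫ z, V z ∂μ)) :=
  tendsto_integral_filter_of_dominated_convergence (fun _ => 1)
    (.of_forall fun i => ((hU i).integrable_comp_sub μ (y i)).aestronglyMeasurable)
    (.of_forall fun i => .of_forall fun _ => (hU i).norm_le_one _) (integrable_const 1) h

theorem tendsto_movingAverage_atBot (hu : IsProfile u) (h : Tendsto u atBot (𝓝 a)) :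
    Tendsto (movingAverage μ u) atBot (𝓝 a) := by
  simpa using tendsto_movingAverage (μ := μ) (V := fun _ => a) (fun _ : ℝ => hu)
    (.of_forall fun z => h.comp (tendsto_atBot_add_const_right atBot (-z) tendsto_id))

theorem tendsto_movingAverage_atTop (hu : IsProfile u) (h : Tendsto u atTop (𝓝 a)) :
    Tendsto (movingAverage μ u) atTop (𝓝 a) := by
  simpa using tendsto_movingAverage (μ := μ) (V := fun _ => a) (fun _ : ℝ => hu)
    (.of_forall fun z => h.comp (tendsto_atTop_add_const_right atTop (-z) tendsto_id))

theorem continuous_movingAverage [NullSingletonClass μ] (hu : IsProfile u) :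
    Continuous (movingAverage μ u) :=
  continuous_iff_continuousAt.2 fun x => tendsto_movingAverage (fun _ => hu) <|
    (hu.ae_continuousAt_sub μ x).mono fun z hz =>
      hz.tendsto.comp (f := fun y => y - z) (continuous_id.sub continuous_const).continuousAt

theorem exists_movingAverage_eq [NullSingletonClass μ] (hu : IsProfile u)
    (ha : Tendsto u atBot (𝓝 a)) (hb : Tendsto u atTop (𝓝 b)) {c : ℝ} (hc : c ∈ Set.Ioo a b) :
    ∃ x, movingAverage μ u x = c :=
  mem_range_of_exists_le_of_exists_ge (continuous_movingAverage hu)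
    ((tendsto_movingAverage_atBot hu ha).eventually_le_const hc.1).exists
    ((tendsto_movingAverage_atTop hu hb).eventually_const_le hc.2).exists

end MovingAverage

/-! ### Bistable nonlinearities and the wave map -/

/-- A nondecreasing self-map of `[0, 1]` with stable fixed points `0` and `1` separated by a single
unstable one, `θ`. -/
structure IsBistable (g : ℝ → ℝ) (θ : ℝ) : Prop where
  continuousOn : ContinuousOn g (Set.Icc 0 1)
  monotoneOn : MonotoneOn g (Set.Icc 0 1)
  map_zero : g 0 = 0
  map_one : g 1 = 1
  mem_Ioo : θ ∈ Set.Ioo (0 : ℝ) 1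
  map_threshold : g θ = θ
  lt_self : ∀ x ∈ Set.Ioo 0 θ, g x < x
  self_lt : ∀ x ∈ Set.Ioo θ 1, x < g x

/-- The nonlinearity governing reflected profiles. -/
def dual (g : ℝ → ℝ) (x : ℝ) : ℝ := 1 - g (1 - x)

theorem dual_dual (g : ℝ → ℝ) : dual (dual g) = g := by
  ext x
  simp [dual]

namespace IsBistable

variable {g : ℝ → ℝ} {θ x : ℝ}

theorem dual (hg : IsBistable g θ) : IsBistable (dual g) (1 - θ) where
  continuousOn := continuousOn_const.sub <| hg.continuousOn.comp (by fun_prop) fun _ hx =>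
    Set.sub_mem_Icc_iff_right.2 (by simpa using hx)
  monotoneOn x hx y hy h := sub_le_sub_left (hg.monotoneOn
    (Set.sub_mem_Icc_iff_right.2 (by simpa using hy))
    (Set.sub_mem_Icc_iff_right.2 (by simpa using hx)) (sub_le_sub_left h 1)) 1
  map_zero := by simp [_root_.dual, hg.map_one]
  map_one := by simp [_root_.dual, hg.map_zero]
  mem_Ioo := Set.sub_mem_Ioo_iff_right.2 (by simpa using hg.mem_Ioo)
  map_threshold := by simp [_root_.dual, hg.map_threshold]
  lt_self x hx := sub_lt_comm.1 <|
    hg.self_lt (1 - x) ⟨lt_sub_comm.1 hx.2, sub_lt_self 1 hx.1⟩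
  self_lt x hx := lt_sub_comm.1 <|
    hg.lt_self (1 - x) ⟨sub_pos.2 hx.2, sub_lt_comm.1 hx.1⟩

theorem map_mem_Icc (hg : IsBistable g θ) (hx : x ∈ Set.Icc (0 : ℝ) 1) : g x ∈ Set.Icc 0 1 :=
  ⟨hg.map_zero ▸ hg.monotoneOn (Set.left_mem_Icc.2 zero_le_one) hx hx.1,
    hg.map_one ▸ hg.monotoneOn hx (Set.right_mem_Icc.2 zero_le_one) hx.2⟩

theorem self_le (hg : IsBistable g θ) (hx : x ∈ Set.Icc θ 1) : x ≤ g x := by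
  rcases hx.1.eq_or_lt with rfl | h₀
  · exact hg.map_threshold.ge
  rcases hx.2.eq_or_lt with rfl | h₁
  · exact hg.map_one.ge
  exact (hg.self_lt x ⟨h₀, h₁⟩).le

theorem eq_of_map_eq_self (hg : IsBistable g θ) (hx : x ∈ Set.Icc (0 : ℝ) 1) (h : g x = x) :
    x = 0 ∨ x = θ ∨ x = 1 := by
  by_contra! hne
  rcases hne.2.1.lt_or_gt with hlt | hgt
  · exact (hg.lt_self x ⟨hx.1.lt_of_ne' hne.1, hlt⟩).ne h
  · exact (hg.self_lt x ⟨hgt, hx.2.lt_of_ne hne.2.2⟩).ne' h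

theorem tendsto_comp (hg : IsBistable g θ) {ι : Type*} {l : Filter ι} [l.NeBot] {y : ι → ℝ}
    (hy : ∀ i, y i ∈ Set.Icc (0 : ℝ) 1) (h : Tendsto y l (𝓝 x)) :
    Tendsto (fun i => g (y i)) l (𝓝 (g x)) :=
  (hg.continuousOn x (isClosed_Icc.mem_of_tendsto h (.of_forall hy))).tendsto.comp
    (tendsto_nhdsWithin_iff.2 ⟨h, .of_forall hy⟩)

end IsBistable

/-- The right-hand side of the traveling wave equation: profiles fixed by `waveMap μ g ℓ` are
waves of speed `ℓ`. The shift by `ℓ` is applied to the average instead of the kernel. -/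
noncomputable def waveMap (μ : Measure ℝ) (g : ℝ → ℝ) (ℓ : ℝ) (u : ℝ → ℝ) (x : ℝ) : ℝ :=
  g (movingAverage μ u (x + ℓ))

theorem waveMap_comp_add_right (μ : Measure ℝ) (g : ℝ → ℝ) (ℓ : ℝ) (u : ℝ → ℝ) (s : ℝ) :
    waveMap μ g ℓ (fun y => u (y + s)) = fun x => waveMap μ g ℓ u (x + s) := by
  ext x
  rw [waveMap, movingAverage_comp_add_right, add_right_comm, waveMap]

section WaveMap

variable {μ : Measure ℝ} [IsProbabilityMeasure μ] {g : ℝ → ℝ} {θ ℓ ℓ' a : ℝ} {u v : ℝ → ℝ}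

theorem IsProfile.waveMap (hg : IsBistable g θ) (hu : IsProfile u) (ℓ : ℝ) :
    IsProfile (waveMap μ g ℓ u) where
  mono _ _ h := hg.monotoneOn (hu.movingAverage.mem_Icc _) (hu.movingAverage.mem_Icc _)
    (hu.movingAverage.mono (by gcongr))
  mem_Icc _ := hg.map_mem_Icc (hu.movingAverage.mem_Icc _)

theorem waveMap_mono (hg : IsBistable g θ) (hu : IsProfile u) (hv : IsProfile v) (hℓ : ℓ ≤ ℓ')
    (h : u ≤ v) : waveMap μ g ℓ u ≤ waveMap μ g ℓ' v := fun x =>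
  hg.monotoneOn (hu.movingAverage.mem_Icc _) (hv.movingAverage.mem_Icc _) <|
    (movingAverage_mono hu hv h _).trans (hv.movingAverage.mono (by gcongr))

theorem continuous_waveMap [NullSingletonClass μ] (hg : IsBistable g θ) (hu : IsProfile u) :
    Continuous (waveMap μ g ℓ u) :=
  hg.continuousOn.comp_continuous ((continuous_movingAverage hu).comp (by fun_prop))
    fun _ => hu.movingAverage.mem_Icc _

theorem tendsto_waveMap {ι : Type*} {l : Filter ι} [l.IsCountablyGenerated] [l.NeBot]
    (hg : IsBistable g θ) {U : ι → ℝ → ℝ} (hU : ∀ i, IsProfile (U i))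
    (h : ∀ x, Tendsto (fun i => U i x) l (𝓝 (u x))) (x : ℝ) :
    Tendsto (fun i => waveMap μ g ℓ (U i) x) l (𝓝 (waveMap μ g ℓ u x)) :=
  hg.tendsto_comp (fun i => (hU i).movingAverage.mem_Icc _)
    (tendsto_movingAverage hU (.of_forall fun _ => h _))

theorem tendsto_waveMap_atBot (hg : IsBistable g θ) (hu : IsProfile u)
    (h : Tendsto u atBot (𝓝 a)) : Tendsto (waveMap μ g ℓ u) atBot (𝓝 (g a)) :=
  hg.tendsto_comp (fun _ => hu.movingAverage.mem_Icc _) <|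
    (tendsto_movingAverage_atBot hu h).comp (tendsto_atBot_add_const_right atBot ℓ tendsto_id)

theorem tendsto_waveMap_atTop (hg : IsBistable g θ) (hu : IsProfile u)
    (h : Tendsto u atTop (𝓝 a)) : Tendsto (waveMap μ g ℓ u) atTop (𝓝 (g a)) :=
  hg.tendsto_comp (fun _ => hu.movingAverage.mem_Icc _) <|
    (tendsto_movingAverage_atTop hu h).comp (tendsto_atTop_add_const_right atTop ℓ tendsto_id)

end WaveMap

/-! ### Reflection of the kernel -/

section Reflection

variable {μ : Measure ℝ}

instance isProbabilityMeasure_neg [IsProbabilityMeasure μ] : IsProbabilityMeasure μ.neg :=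
  Measure.isProbabilityMeasure_map measurable_neg.aemeasurable

instance nullSingletonClass_neg [NullSingletonClass μ] : NullSingletonClass μ.neg :=
  ⟨fun x => by simp [Measure.neg_apply]⟩

theorem integral_measure_neg (μ : Measure ℝ) (f : ℝ → ℝ) : ∫ z, f z ∂μ.neg = ∫ z, f (-z) ∂μ :=
  (MeasurableEquiv.neg ℝ).measurableEmbedding.integral_map f

theorem ae_abs_le_neg {R : ℝ} (hR : ∀ᵐ z ∂μ, |z| ≤ R) : ∀ᵐ z ∂μ.neg, |z| ≤ R :=
  (MeasurableEquiv.neg ℝ).measurableEmbedding.ae_map_iff.2 (by simpa using hR)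

variable [IsProbabilityMeasure μ] {g u : ℝ → ℝ}

theorem movingAverage_neg_reflect (hu : IsProfile u) (x : ℝ) :
    movingAverage μ.neg (reflect u) x = 1 - movingAverage μ u (-x) :=
  calc ∫ z, reflect u (x - z) ∂μ.neg = ∫ z, (1 - u (-x - z)) ∂μ := by
        rw [integral_measure_neg]
        simp only [reflect, sub_neg_eq_add, neg_add']
    _ = 1 - movingAverage μ u (-x) := by
        rw [integral_sub (integrable_const 1) (hu.integrable_comp_sub μ (-x))]
        simp [movingAverage]

theorem waveMap_neg_reflect (hu : IsProfile u) (ℓ : ℝ) :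
    waveMap μ.neg (dual g) (-ℓ) (reflect u) = reflect (waveMap μ g ℓ u) := by
  ext x
  simp only [waveMap, dual, reflect, movingAverage_neg_reflect hu, sub_sub_cancel, neg_add, neg_neg]

end Reflection

/-! ### The mean of the kernel bounds the speed of supersolutions -/

/-- A primitive of the deficit `x ↦ u x - movingAverage μ u (x + ℓ)`. -/
noncomputable def potential (μ : Measure ℝ) (ℓ : ℝ) (u : ℝ → ℝ) (x : ℝ) : ℝ :=
  ∫ z, (∫ t in (x + ℓ - z)..x, u t) ∂μ

section MeanSpeed

variable {μ : Measure ℝ} [IsProbabilityMeasure μ] {u : ℝ → ℝ} {ℓ a b : ℝ}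

theorem IsProfile.norm_integral_shift_le (hu : IsProfile u) (ℓ x z : ℝ) :
    ‖∫ t in (x + ℓ - z)..x, u t‖ ≤ |z - ℓ| := by
  have h := intervalIntegral.norm_integral_le_of_norm_le_const (a := x + ℓ - z) (b := x)
    fun t _ => hu.norm_le_one t
  rwa [one_mul, show x - (x + ℓ - z) = z - ℓ by ring] at h

theorem IsProfile.continuous_integral_shift (hu : IsProfile u) (ℓ x : ℝ) :
    Continuous fun z => ∫ t in (x + ℓ - z)..x, u t := by
  simp_rw [intervalIntegral.integral_symm x]
  exact ((intervalIntegral.continuous_primitive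
    (fun _ _ => hu.mono.intervalIntegrable) x).comp (by fun_prop)).neg

theorem IsProfile.integrable_integral_shift (hμ : Integrable (fun z => z) μ) (hu : IsProfile u)
    (ℓ x : ℝ) : Integrable (fun z => ∫ t in (x + ℓ - z)..x, u t) μ :=
  (hμ.sub (integrable_const ℓ)).mono (hu.continuous_integral_shift ℓ x).aestronglyMeasurable
    (.of_forall (hu.norm_integral_shift_le ℓ x))

theorem integral_deficit (hμ : Integrable (fun z => z) μ) (hu : IsProfile u) (ℓ A B : ℝ) :
    ∫ x in A..B, (u x - movingAverage μ u (x + ℓ)) = potential μ ℓ u B - potential μ ℓ u A := by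
  have : IsFiniteMeasure (volume.restrict (Set.uIoc A B)) :=
    inferInstanceAs (IsFiniteMeasure (volume.restrict (Set.Ioc _ _)))
  have hswap : Integrable (Function.uncurry fun x z => u x - u (x + ℓ - z))
      ((volume.restrict (Set.uIoc A B)).prod μ) := by
    refine .of_mem_Icc (-1) 1 ?_ (.of_forall fun p => ?_)
    · exact ((hu.mono.measurable.comp measurable_fst).sub
        (hu.mono.measurable.comp (by fun_prop))).aemeasurable
    · exact abs_le.1 (abs_sub_le_of_le_of_le (hu.mem_Icc _).1 (hu.mem_Icc _).2
        (hu.mem_Icc _).1 (hu.mem_Icc _).2 |>.trans_eq (sub_zero 1))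
  calc ∫ x in A..B, (u x - movingAverage μ u (x + ℓ))
      = ∫ x in A..B, ∫ z, (u x - u (x + ℓ - z)) ∂μ := by
        congr! 2 with x
        rw [integral_sub (integrable_const _) (hu.integrable_comp_sub μ _)]
        simp [movingAverage]
    _ = ∫ z, (∫ x in A..B, (u x - u (x + ℓ - z))) ∂μ := intervalIntegral_integral_swap hswap
    _ = ∫ z, ((∫ t in (B + ℓ - z)..B, u t) - ∫ t in (A + ℓ - z)..A, u t) ∂μ := by
        congr! 2 with z
        have hint : ∀ c d, IntervalIntegrable u volume c d := fun _ _ =>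
          hu.mono.intervalIntegrable
        simp_rw [add_sub_assoc]
        rw [intervalIntegral.integral_sub (hint _ _)
            (hu.comp_add_right _).mono.intervalIntegrable,
          intervalIntegral.integral_comp_add_right,
          intervalIntegral.integral_interval_sub_interval_comm' (hint _ _) (hint _ _) (hint _ _)]
    _ = potential μ ℓ u B - potential μ ℓ u A :=
        integral_sub (hu.integrable_integral_shift hμ ℓ B) (hu.integrable_integral_shift hμ ℓ A)

theorem tendsto_potential {l : Filter ℝ} [l.IsCountablyGenerated]
    (hμ : Integrable (fun z => z) μ) (hu : IsProfile u)
    (h : ∀ t, Tendsto (fun x => u (x + t)) l (𝓝 a)) :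
    Tendsto (potential μ ℓ u) l (𝓝 (a * ((∫ z, z ∂μ) - ℓ))) := by
  have hpoint : ∀ z, Tendsto (fun x => ∫ t in (x + ℓ - z)..x, u t) l (𝓝 (a * (z - ℓ))) := by
    intro z
    have hshift : ∀ x, ∫ t in (x + ℓ - z)..x, u t = ∫ t in (ℓ - z)..0, u (x + t) := fun x => by
      rw [intervalIntegral.integral_comp_add_left, add_sub_assoc, add_zero]
    have hlim : ∫ _ in (ℓ - z)..0, a = a * (z - ℓ) := by
      rw [intervalIntegral.integral_const, smul_eq_mul]
      ring
    rw [← hlim]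
    simp_rw [hshift]
    refine intervalIntegral.tendsto_integral_filter_of_dominated_convergence (fun _ => 1)
      (.of_forall fun x => ?_) (.of_forall fun x => .of_forall fun t _ => hu.norm_le_one _)
      intervalIntegrable_const (.of_forall fun t _ => h t)
    exact (hu.mono.measurable.comp (measurable_const_add x)).aestronglyMeasurable
  have hmean : ∫ z, a * (z - ℓ) ∂μ = a * ((∫ z, z ∂μ) - ℓ) := by
    rw [integral_const_mul, integral_sub hμ (integrable_const ℓ)]
    simp
  rw [← hmean]
  exact tendsto_integral_filter_of_dominated_convergence (fun z => |z - ℓ|)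
    (.of_forall fun x => (hu.continuous_integral_shift ℓ x).aestronglyMeasurable)
    (.of_forall fun x => .of_forall (hu.norm_integral_shift_le ℓ x))
    (hμ.sub (integrable_const ℓ)).abs (.of_forall hpoint)

theorem integral_deficit_le (hμ : Integrable (fun z => z) μ) (hu : IsProfile u)
    (ha : Tendsto u atBot (𝓝 a)) (hb : Tendsto u atTop (𝓝 b))
    (h : ∀ x, movingAverage μ u (x + ℓ) ≤ u x) {M : ℝ} (hM : 0 ≤ M) :
    ∫ x in (-M)..M, (u x - movingAverage μ u (x + ℓ)) ≤ (b - a) * ((∫ z, z ∂μ) - ℓ) := by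
  have hlim : Tendsto (fun N => ∫ x in (-N)..N, (u x - movingAverage μ u (x + ℓ))) atTop
      (𝓝 ((b - a) * ((∫ z, z ∂μ) - ℓ))) := by
    have htop := tendsto_potential (ℓ := ℓ) hμ hu fun t =>
      hb.comp (tendsto_atTop_add_const_right atTop t tendsto_id)
    have hbot := tendsto_potential (ℓ := ℓ) hμ hu fun t =>
      ha.comp (tendsto_atBot_add_const_right atBot t tendsto_id)
    simp_rw [integral_deficit hμ hu, sub_mul]
    exact htop.sub (hbot.comp tendsto_neg_atTop_atBot)
  refine ge_of_tendsto hlim ?_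
  filter_upwards [eventually_ge_atTop M] with N hN
  have hint : IntervalIntegrable (fun x => u x - movingAverage μ u (x + ℓ)) volume (-N) N :=
    hu.mono.intervalIntegrable.sub (hu.movingAverage.comp_add_right ℓ).mono.intervalIntegrable
  exact intervalIntegral.integral_mono_interval (neg_le_neg hN) (by linarith) hN
    (.of_forall fun x => sub_nonneg.2 (h x)) hint

theorem speed_le_mean (hμ : Integrable (fun z => z) μ) (hu : IsProfile u)
    (ha : Tendsto u atBot (𝓝 a)) (hb : Tendsto u atTop (𝓝 b)) (hab : a < b)
    (h : ∀ x, movingAverage μ u (x + ℓ) ≤ u x) : ℓ ≤ ∫ z, z ∂μ := by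
  have hle := integral_deficit_le hμ hu ha hb h le_rfl
  rw [neg_zero, intervalIntegral.integral_same] at hle
  exact sub_nonneg.1 (nonneg_of_mul_nonneg_right hle (sub_pos.2 hab))

theorem speed_lt_mean [NullSingletonClass μ] (hμ : Integrable (fun z => z) μ) (hu : IsProfile u)
    (hcont : Continuous u) (ha : Tendsto u atBot (𝓝 a)) (hb : Tendsto u atTop (𝓝 b))
    (h : ∀ x, movingAverage μ u (x + ℓ) ≤ u x)
    (hlt : ∃ x, movingAverage μ u (x + ℓ) < u x) : ℓ < ∫ z, z ∂μ := by
  obtain ⟨x₀, hx₀⟩ := hlt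
  have hle := integral_deficit_le hμ hu ha hb h (M := |x₀| + 1) (by positivity)
  have hpos : 0 < ∫ x in (-(|x₀| + 1))..(|x₀| + 1), (u x - movingAverage μ u (x + ℓ)) :=
    intervalIntegral.integral_pos (by linarith [abs_nonneg x₀])
      (hcont.sub ((continuous_movingAverage hu).comp (by fun_prop))).continuousOn
      (fun x _ => sub_nonneg.2 (h x))
      ⟨x₀, abs_le.1 (le_add_of_nonneg_right zero_le_one), sub_pos.2 hx₀⟩
  have hab : a ≤ b := (hu.mono.le_of_tendsto ha 0).trans (hu.mono.ge_of_tendsto hb 0)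
  exact sub_pos.1 (pos_of_mul_pos_right (hpos.trans_le hle) (sub_nonneg.2 hab))

end MeanSpeed

/-! ### Monotone iteration above an obstacle -/

/-- The iterates of `waveMap μ g ℓ`, truncated from below by the obstacle `w`. -/
noncomputable def obstacleSeq (μ : Measure ℝ) (g : ℝ → ℝ) (ℓ : ℝ) (w : ℝ → ℝ) : ℕ → ℝ → ℝ
  | 0 => w
  | n + 1 => w ⊔ waveMap μ g ℓ (obstacleSeq μ g ℓ w n)

/-- The least supersolution above the obstacle `w`. -/
noncomputable def obstacleLimit (μ : Measure ℝ) (g : ℝ → ℝ) (ℓ : ℝ) (w : ℝ → ℝ) (x : ℝ) : ℝ :=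
  ⨆ n, obstacleSeq μ g ℓ w n x

section Obstacle

variable {μ : Measure ℝ} [IsProbabilityMeasure μ] {g : ℝ → ℝ} {θ ℓ : ℝ} {v w : ℝ → ℝ}

theorem IsProfile.obstacleSeq (hg : IsBistable g θ) (hw : IsProfile w) (ℓ : ℝ) :
    ∀ n, IsProfile (obstacleSeq μ g ℓ w n)
  | 0 => hw
  | n + 1 => hw.sup ((IsProfile.obstacleSeq hg hw ℓ n).waveMap hg ℓ)

theorem monotone_obstacleSeq (hg : IsBistable g θ) (hw : IsProfile w) (ℓ : ℝ) :
    Monotone (obstacleSeq μ g ℓ w) := by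
  refine monotone_nat_of_le_succ fun n => ?_
  induction n with
  | zero => exact le_sup_left
  | succ n ih =>
    exact sup_le_sup_left (waveMap_mono hg (hw.obstacleSeq hg ℓ n) (hw.obstacleSeq hg ℓ (n + 1))
      le_rfl ih) w

theorem tendsto_obstacleSeq (hg : IsBistable g θ) (hw : IsProfile w) (ℓ x : ℝ) :
    Tendsto (fun n => obstacleSeq μ g ℓ w n x) atTop (𝓝 (obstacleLimit μ g ℓ w x)) :=
  tendsto_atTop_ciSup (fun _ _ h => monotone_obstacleSeq hg hw ℓ h x)
    ⟨1, by rintro _ ⟨n, rfl⟩; exact ((hw.obstacleSeq hg ℓ n).mem_Icc x).2⟩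

theorem IsProfile.obstacleLimit (hg : IsBistable g θ) (hw : IsProfile w) (ℓ : ℝ) :
    IsProfile (obstacleLimit μ g ℓ w) :=
  .of_tendsto (hw.obstacleSeq hg ℓ) (tendsto_obstacleSeq hg hw ℓ)

theorem obstacleLimit_eq_sup (hg : IsBistable g θ) (hw : IsProfile w) (ℓ : ℝ) :
    obstacleLimit μ g ℓ w = w ⊔ waveMap μ g ℓ (obstacleLimit μ g ℓ w) := by
  ext x
  exact tendsto_nhds_unique ((tendsto_obstacleSeq hg hw ℓ x).comp (tendsto_add_atTop_nat 1))
    (tendsto_const_nhds.sup_nhds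
      (tendsto_waveMap hg (hw.obstacleSeq hg ℓ) (tendsto_obstacleSeq hg hw ℓ) x))

theorem le_obstacleLimit (hg : IsBistable g θ) (hw : IsProfile w) (ℓ : ℝ) :
    w ≤ obstacleLimit μ g ℓ w := by
  rw [obstacleLimit_eq_sup hg hw ℓ]
  exact le_sup_left

theorem waveMap_obstacleLimit_le (hg : IsBistable g θ) (hw : IsProfile w) (ℓ : ℝ) :
    waveMap μ g ℓ (obstacleLimit μ g ℓ w) ≤ obstacleLimit μ g ℓ w := by
  conv_rhs => rw [obstacleLimit_eq_sup hg hw ℓ]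
  exact le_sup_right

theorem obstacleLimit_le (hg : IsBistable g θ) (hw : IsProfile w) (hv : IsProfile v) (hwv : w ≤ v)
    (h : waveMap μ g ℓ v ≤ v) : obstacleLimit μ g ℓ w ≤ v := by
  have hseq : ∀ n, obstacleSeq μ g ℓ w n ≤ v := fun n => by
    induction n with
    | zero => exact hwv
    | succ n ih =>
      exact sup_le hwv ((waveMap_mono hg (hw.obstacleSeq hg ℓ n) hv le_rfl ih).trans h)
  exact fun x => le_of_tendsto' (tendsto_obstacleSeq hg hw ℓ x) fun n => hseq n x

end Obstacle

/-! ### Sub- and supersolutions connecting `0` to `1` -/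

/-- There is a supersolution of speed `ℓ` that decays at `-∞` and is eventually equal to `1`. -/
def HasSupersolution (μ : Measure ℝ) (g : ℝ → ℝ) (ℓ : ℝ) : Prop :=
  ∃ v, IsProfile v ∧ waveMap μ g ℓ v ≤ v ∧ Tendsto v atBot (𝓝 0) ∧ ∀ᶠ x in atTop, v x = 1

/-- There is a subsolution of speed `ℓ` that vanishes near `-∞` and tends to `1` at `+∞`. -/
def HasSubsolution (μ : Measure ℝ) (g : ℝ → ℝ) (ℓ : ℝ) : Prop :=
  ∃ w, IsProfile w ∧ w ≤ waveMap μ g ℓ w ∧ (∀ᶠ x in atBot, w x = 0) ∧ Tendsto w atTop (𝓝 1)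

/-- The unit step; its value at the jump is `0`. -/
noncomputable def heaviside (x : ℝ) : ℝ := if 0 < x then 1 else 0

theorem heaviside_of_pos {x : ℝ} (hx : 0 < x) : heaviside x = 1 := if_pos hx

theorem heaviside_of_nonpos {x : ℝ} (hx : x ≤ 0) : heaviside x = 0 := if_neg hx.not_gt

theorem isProfile_heaviside : IsProfile heaviside where
  mono x y h := by
    unfold heaviside
    split_ifs <;> linarith
  mem_Icc x := by
    unfold heaviside
    split_ifs <;> simp

theorem eventually_heaviside_atTop : ∀ᶠ x in atTop, heaviside x = 1 :=
  (eventually_gt_atTop 0).mono fun _ => heaviside_of_pos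

theorem eventually_heaviside_atBot : ∀ᶠ x in atBot, heaviside x = 0 :=
  (eventually_le_atBot 0).mono fun _ => heaviside_of_nonpos

section Solutions

variable {μ : Measure ℝ} [IsProbabilityMeasure μ] {g : ℝ → ℝ} {θ ℓ ℓ' R : ℝ}

theorem HasSubsolution.mono (hg : IsBistable g θ) (h : HasSubsolution μ g ℓ) (hℓ : ℓ ≤ ℓ') :
    HasSubsolution μ g ℓ' := by
  obtain ⟨w, hw, hsub, hlim⟩ := h
  exact ⟨w, hw, hsub.trans (waveMap_mono hg hw hw hℓ le_rfl), hlim⟩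

theorem HasSupersolution.hasSubsolution_neg_dual (h : HasSupersolution μ g ℓ) :
    HasSubsolution μ.neg (dual g) (-ℓ) := by
  obtain ⟨v, hv, hsup, hbot, htop⟩ := h
  refine ⟨reflect v, hv.reflect, ?_, ?_, by simpa using tendsto_reflect_atTop hbot⟩
  · rw [waveMap_neg_reflect hv]
    exact reflect_le_reflect hsup
  · filter_upwards [tendsto_neg_atBot_atTop.eventually htop] with x hx
    simp [reflect, hx]

theorem HasSubsolution.hasSupersolution_neg_dual (h : HasSubsolution μ g ℓ) :
    HasSupersolution μ.neg (dual g) (-ℓ) := by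
  obtain ⟨w, hw, hsub, hbot, htop⟩ := h
  refine ⟨reflect w, hw.reflect, ?_, by simpa using tendsto_reflect_atBot htop, ?_⟩
  · rw [waveMap_neg_reflect hw]
    exact reflect_le_reflect hsub
  · filter_upwards [tendsto_neg_atTop_atBot.eventually hbot] with x hx
    simp [reflect, hx]

theorem hasSubsolution_neg_dual_iff :
    HasSubsolution μ.neg (dual g) (-ℓ) ↔ HasSupersolution μ g ℓ :=
  ⟨fun h => by simpa [Measure.neg_neg, dual_dual] using h.hasSupersolution_neg_dual,
    (·.hasSubsolution_neg_dual)⟩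

theorem hasSupersolution_neg_dual_iff :
    HasSupersolution μ.neg (dual g) (-ℓ) ↔ HasSubsolution μ g ℓ :=
  ⟨fun h => by simpa [Measure.neg_neg, dual_dual] using h.hasSubsolution_neg_dual,
    (·.hasSupersolution_neg_dual)⟩

theorem hasSupersolution_neg_radius (hR : ∀ᵐ z ∂μ, |z| ≤ R) (hg : IsBistable g θ) :
    HasSupersolution μ g (-R) := by
  refine ⟨heaviside, isProfile_heaviside, fun x => ?_,
    tendsto_const_nhds.congr' (eventually_heaviside_atBot.mono fun _ => Eq.symm),
    eventually_heaviside_atTop⟩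
  have hfix : g (heaviside x) = heaviside x := by
    unfold heaviside
    split_ifs
    exacts [hg.map_one, hg.map_zero]
  have havg : movingAverage μ heaviside (x + -R) ≤ heaviside x := by
    simpa using movingAverage_le_comp_add hR isProfile_heaviside (x + -R)
  exact (hg.monotoneOn (isProfile_heaviside.movingAverage.mem_Icc _)
    (isProfile_heaviside.mem_Icc x) havg).trans_eq hfix

theorem hasSubsolution_radius (hR : ∀ᵐ z ∂μ, |z| ≤ R) (hg : IsBistable g θ) :
    HasSubsolution μ g R :=
  hasSupersolution_neg_dual_iff.1 (hasSupersolution_neg_radius (ae_abs_le_neg hR) hg.dual)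

end Solutions

section Dichotomy

variable {μ : Measure ℝ} [IsProbabilityMeasure μ] {g w : ℝ → ℝ} {θ ℓ R a : ℝ}

theorem integrable_id_of_ae_abs_le (hR : ∀ᵐ z ∂μ, |z| ≤ R) : Integrable (fun z => z) μ :=
  .of_mem_Icc (-R) R aemeasurable_id (hR.mono fun _ => abs_le.1)

theorem eventually_obstacleSeq_eq_zero (hR : ∀ᵐ z ∂μ, |z| ≤ R) (hg : IsBistable g θ)
    (hw : IsProfile w) (h : ∀ᶠ x in atBot, w x = 0) (n : ℕ) :
    ∀ᶠ x in atBot, obstacleSeq μ g ℓ w n x = 0 := by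
  induction n with
  | zero => exact h
  | succ n ih =>
    have hseq : IsProfile (obstacleSeq μ g ℓ w n) := hw.obstacleSeq hg ℓ n
    filter_upwards [h, (tendsto_atBot_add_const_right atBot (ℓ + R) tendsto_id).eventually ih]
      with x hwx hx
    have havg : movingAverage μ (obstacleSeq μ g ℓ w n) (x + ℓ) = 0 :=
      le_antisymm ((movingAverage_le_comp_add hR hseq _).trans_eq (by rwa [add_assoc]))
        (hseq.movingAverage.mem_Icc _).1
    simp [obstacleSeq, waveMap, hwx, havg, hg.map_zero]

theorem map_eq_of_tendsto_obstacleLimit_atBot (hg : IsBistable g θ) (hw : IsProfile w)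
    (h : ∀ᶠ x in atBot, w x = 0) (ha : Tendsto (obstacleLimit μ g ℓ w) atBot (𝓝 a)) :
    g a = a := by
  have hlim : IsProfile (obstacleLimit μ g ℓ w) := hw.obstacleLimit hg ℓ
  have hmap := tendsto_waveMap_atBot (μ := μ) (ℓ := ℓ) hg hlim ha
  refine tendsto_nhds_unique_of_eventuallyEq hmap ha ?_
  filter_upwards [h] with x hx
  rw [congr_fun (obstacleLimit_eq_sup hg hw ℓ) x, Pi.sup_apply, hx,
    sup_of_le_right ((hlim.waveMap hg ℓ).mem_Icc x).1]

theorem hasSubsolution_of_map_obstacleSeq_eq_one (hR : ∀ᵐ z ∂μ, |z| ≤ R) (hg : IsBistable g θ)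
    {n : ℕ} (hn : g (obstacleSeq μ g ℓ heaviside n (ℓ - R)) = 1) : HasSubsolution μ g ℓ := by
  have hseq := isProfile_heaviside.obstacleSeq (μ := μ) hg ℓ
  have hmono := monotone_obstacleSeq (μ := μ) hg isProfile_heaviside ℓ
  have hstep : heaviside ≤ waveMap μ g ℓ (obstacleSeq μ g ℓ heaviside n) := fun x => by
    rcases le_or_gt x 0 with hx | hx
    · rw [heaviside_of_nonpos hx]
      exact (((hseq n).waveMap hg ℓ).mem_Icc x).1
    · have havg : obstacleSeq μ g ℓ heaviside n (ℓ - R) ≤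
          movingAverage μ (obstacleSeq μ g ℓ heaviside n) (x + ℓ) :=
        ((hseq n).mono (by linarith)).trans (comp_sub_le_movingAverage hR (hseq n) _)
      rw [heaviside_of_pos hx, ← hn]
      exact hg.monotoneOn ((hseq n).mem_Icc _) ((hseq n).movingAverage.mem_Icc _) havg
  refine ⟨_, hseq n, (hmono n.le_succ).trans (sup_le hstep le_rfl),
    eventually_obstacleSeq_eq_zero hR hg isProfile_heaviside eventually_heaviside_atBot n,
    tendsto_const_nhds.congr' ?_⟩
  filter_upwards [eventually_heaviside_atTop] with x hx
  exact le_antisymm (hx.ge.trans (hmono n.zero_le x)) ((hseq n).mem_Icc x).2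

-- The obstacle solution tends at `-∞` to a fixed point of `g`: `0` gives a supersolution, `θ`
-- contradicts the bound on the speed, and `1` is already reached by finitely many iterations.
theorem hasSupersolution_or_hasSubsolution_of_mean_lt (hR : ∀ᵐ z ∂μ, |z| ≤ R)
    (hg : IsBistable g θ) (hflat : ∀ᶠ x in 𝓝[≤] 1, g x = 1) (hℓ : ∫ z, z ∂μ < ℓ) :
    HasSupersolution μ g ℓ ∨ HasSubsolution μ g ℓ := by
  have hφ : IsProfile (obstacleLimit μ g ℓ heaviside) := isProfile_heaviside.obstacleLimit hg ℓ
  have hsup := waveMap_obstacleLimit_le (μ := μ) hg isProfile_heaviside ℓ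
  have htop : ∀ᶠ x in atTop, obstacleLimit μ g ℓ heaviside x = 1 := by
    filter_upwards [eventually_heaviside_atTop] with x hx
    exact le_antisymm (hφ.mem_Icc x).2
      (hx.ge.trans (le_obstacleLimit hg isProfile_heaviside ℓ x))
  obtain ⟨a, ha⟩ := hφ.exists_tendsto_atBot
  have hle : ∀ x, a ≤ obstacleLimit μ g ℓ heaviside x := hφ.mono.le_of_tendsto ha
  rcases hg.eq_of_map_eq_self (hφ.mem_Icc_of_tendsto ha) (map_eq_of_tendsto_obstacleLimit_atBot hg
    isProfile_heaviside eventually_heaviside_atBot ha) with rfl | rfl | rfl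
  · exact .inl ⟨_, hφ, hsup, ha, htop⟩
  · refine absurd (speed_le_mean (integrable_id_of_ae_abs_le hR) hφ ha
      (tendsto_const_nhds.congr' (htop.mono fun _ => Eq.symm)) hg.mem_Ioo.2 fun x => ?_) hℓ.not_ge
    exact (hg.self_le ⟨le_movingAverage hφ (.of_forall fun _ => hle _),
      (hφ.movingAverage.mem_Icc _).2⟩).trans (hsup x)
  · right
    have hseq := isProfile_heaviside.obstacleSeq (μ := μ) hg ℓ
    have hlim := tendsto_obstacleSeq (μ := μ) hg isProfile_heaviside ℓ (ℓ - R)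
    rw [le_antisymm (hφ.mem_Icc (ℓ - R)).2 (hle (ℓ - R))] at hlim
    obtain ⟨n, hn⟩ := ((tendsto_nhdsWithin_iff.2
      ⟨hlim, .of_forall fun n => ((hseq n).mem_Icc (ℓ - R)).2⟩).eventually hflat).exists
    exact hasSubsolution_of_map_obstacleSeq_eq_one hR hg hn

theorem eventually_dual_eq_one (h : ∀ᶠ x in 𝓝[≥] 0, g x = 0) : ∀ᶠ x in 𝓝[≤] 1, dual g x = 1 := by
  have hsub : Tendsto (fun x : ℝ => 1 - x) (𝓝[≤] 1) (𝓝[≥] 0) := by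
    refine tendsto_nhdsWithin_iff.2 ⟨?_, ?_⟩
    · exact (Continuous.tendsto' (by fun_prop) 1 0 (sub_self 1)).mono_left nhdsWithin_le_nhds
    · filter_upwards [self_mem_nhdsWithin] with x hx using
        Set.mem_Ici.2 (sub_nonneg.2 (Set.mem_Iic.1 hx))
  filter_upwards [hsub.eventually h] with x hx
  simp [dual, hx]

theorem hasSupersolution_or_hasSubsolution_of_lt_mean (hR : ∀ᵐ z ∂μ, |z| ≤ R)
    (hg : IsBistable g θ) (hflat : ∀ᶠ x in 𝓝[≥] 0, g x = 0) (hℓ : ℓ < ∫ z, z ∂μ) :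
    HasSupersolution μ g ℓ ∨ HasSubsolution μ g ℓ := by
  have hmean : ∫ z, z ∂μ.neg < -ℓ := by
    rw [integral_measure_neg, integral_neg]
    exact neg_lt_neg hℓ
  exact (hasSupersolution_or_hasSubsolution_of_mean_lt (ae_abs_le_neg hR) hg.dual
    (eventually_dual_eq_one hflat) hmean).symm.imp
    hasSubsolution_neg_dual_iff.1 hasSupersolution_neg_dual_iff.1

theorem exists_hasSupersolution_hasSubsolution (hR : ∀ᵐ z ∂μ, |z| ≤ R) (hg : IsBistable g θ)
    (hflat₀ : ∀ᶠ x in 𝓝[≥] 0, g x = 0) (hflat₁ : ∀ᶠ x in 𝓝[≤] 1, g x = 1) {ε : ℝ} (hε : 0 < ε) :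
    ∃ ℓ ∈ Set.Icc (-R) R, ∃ ℓ' ∈ Set.Icc ℓ (ℓ + ε),
      HasSupersolution μ g ℓ ∧ HasSubsolution μ g ℓ' := by
  obtain ⟨z, hz⟩ := hR.exists
  have hR₀ : 0 ≤ R := (abs_nonneg z).trans hz
  let A : Set ℝ := {ℓ | ℓ ∈ Set.Icc (-R) R ∧ HasSupersolution μ g ℓ}
  have hA : A.Nonempty := ⟨-R, ⟨le_rfl, by linarith⟩, hasSupersolution_neg_radius hR hg⟩
  have hAbdd : BddAbove A := ⟨R, fun ℓ hℓ => hℓ.1.2⟩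
  obtain ⟨ℓ, ⟨hℓ, hsup⟩, hlt⟩ := exists_lt_of_lt_csSup hA (sub_lt_self (sSup A) (half_pos hε))
  obtain ⟨ℓ', hne, hℓ'⟩ := (dense_compl_singleton (∫ z, z ∂μ)).exists_between
    (lt_add_of_pos_right (sSup A) (half_pos hε))
  have hle : ℓ ≤ ℓ' := (le_csSup hAbdd ⟨hℓ, hsup⟩).trans hℓ'.1.le
  refine ⟨ℓ, hℓ, ℓ', ⟨hle, by linarith [hℓ'.2]⟩, hsup, ?_⟩
  rcases le_or_gt ℓ' R with hle' | hgt
  · have hnsup : ¬ HasSupersolution μ g ℓ' := fun h =>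
      notMem_of_csSup_lt hℓ'.1 hAbdd ⟨⟨hℓ.1.trans hle, hle'⟩, h⟩
    exact (or_iff_right hnsup).1 <| (lt_or_gt_of_ne hne).elim
      (hasSupersolution_or_hasSubsolution_of_lt_mean hR hg hflat₀)
      (hasSupersolution_or_hasSubsolution_of_mean_lt hR hg hflat₁)
  · exact (hasSubsolution_radius hR hg).mono hg hgt.le

end Dichotomy

/-! ### Approximate waves -/

/-- An approximate wave: a supersolution of speed `ℓ` that is also a subsolution of the larger speed
`ℓ'`. -/
structure IsPseudoWave (μ : Measure ℝ) (g : ℝ → ℝ) (ℓ ℓ' : ℝ) (φ : ℝ → ℝ) : Prop extends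
    IsProfile φ where
  waveMap_le : waveMap μ g ℓ φ ≤ φ
  le_waveMap : φ ≤ waveMap μ g ℓ' φ

section PseudoWave

variable {μ : Measure ℝ} {g φ : ℝ → ℝ} {θ ℓ ℓ' c : ℝ}

theorem IsPseudoWave.comp_add_right (h : IsPseudoWave μ g ℓ ℓ' φ) (s : ℝ) :
    IsPseudoWave μ g ℓ ℓ' fun x => φ (x + s) where
  toIsProfile := h.toIsProfile.comp_add_right s
  waveMap_le := (waveMap_comp_add_right μ g ℓ φ s).trans_le fun _ => h.waveMap_le _
  le_waveMap := le_of_le_of_eq (fun _ => h.le_waveMap _) (waveMap_comp_add_right μ g ℓ' φ s).symm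

variable [IsProbabilityMeasure μ]

theorem exists_isPseudoWave (hg : IsBistable g θ) (hℓ : ℓ ≤ ℓ') (hsup : HasSupersolution μ g ℓ)
    (hsub : HasSubsolution μ g ℓ') :
    ∃ φ, IsPseudoWave μ g ℓ ℓ' φ ∧ Tendsto φ atBot (𝓝 0) ∧ Tendsto φ atTop (𝓝 1) := by
  obtain ⟨v, hv, hvsup, hvbot, hvtop⟩ := hsup
  obtain ⟨w, hw, hwsub, hwbot, hwtop⟩ := hsub
  obtain ⟨A, hA⟩ := eventually_atBot.1 hwbot
  obtain ⟨B, hB⟩ := eventually_atTop.1 hvtop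
  let w' : ℝ → ℝ := fun x => w (x + (A - B))
  have hw' : IsProfile w' := hw.comp_add_right (A - B)
  have hw'sub : w' ≤ waveMap μ g ℓ' w' := by
    rw [waveMap_comp_add_right]
    exact fun _ => hwsub _
  have hw'v : w' ≤ v := fun x => by
    rcases le_total x B with hx | hx
    · exact (hA (x + (A - B)) (by linarith)).trans_le (hv.mem_Icc x).1
    · exact (hw'.mem_Icc x).2.trans_eq (hB x hx).symm
  have hφ : IsProfile (obstacleLimit μ g ℓ w') := hw'.obstacleLimit hg ℓ
  have hw'φ : w' ≤ obstacleLimit μ g ℓ w' := le_obstacleLimit hg hw' ℓ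
  refine ⟨_, ⟨hφ, waveMap_obstacleLimit_le hg hw' ℓ, ?_⟩, ?_, ?_⟩
  · conv_lhs => rw [obstacleLimit_eq_sup hg hw' ℓ]
    exact sup_le (hw'sub.trans (waveMap_mono hg hw' hφ le_rfl hw'φ))
      (waveMap_mono hg hφ hφ hℓ le_rfl)
  · exact tendsto_of_tendsto_of_tendsto_of_le_of_le tendsto_const_nhds hvbot
      (fun x => (hφ.mem_Icc x).1) (obstacleLimit_le hg hw' hv hw'v hvsup)
  · exact tendsto_of_tendsto_of_tendsto_of_le_of_le
      (hwtop.comp (tendsto_atTop_add_const_right atTop (A - B) tendsto_id)) tendsto_const_nhds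
      hw'φ fun x => (hφ.mem_Icc x).2

theorem exists_isPseudoWave_movingAverage_eq [NullSingletonClass μ] (hg : IsBistable g θ)
    (hℓ : ℓ ≤ ℓ') (hsup : HasSupersolution μ g ℓ) (hsub : HasSubsolution μ g ℓ')
    (hc : c ∈ Set.Ioo (0 : ℝ) 1) :
    ∃ φ, IsPseudoWave μ g ℓ ℓ' φ ∧ movingAverage μ φ 0 = c := by
  obtain ⟨φ, hφ, hbot, htop⟩ := exists_isPseudoWave hg hℓ hsup hsub
  obtain ⟨x, hx⟩ := exists_movingAverage_eq (μ := μ) hφ.toIsProfile hbot htop hc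
  exact ⟨_, hφ.comp_add_right x, by rw [movingAverage_comp_add_right, zero_add, hx]⟩

end PseudoWave

/-! ### Compactness -/

theorem exists_subseq_tendsto_of_continuousAt {U : ℕ → ℝ → ℝ} (hU : ∀ k, IsProfile (U k)) :
    ∃ s : ℕ → ℕ, StrictMono s ∧ ∃ V, IsProfile V ∧ ∀ x, ContinuousAt V x → ∀ y : ℕ → ℝ,
      Tendsto y atTop (𝓝 x) → Tendsto (fun k => U (s k) (y k)) atTop (𝓝 (V x)) := by
  obtain ⟨L, -, s, hs, hL⟩ := (isCompact_univ_pi fun _ : ℚ => isCompact_Icc).tendsto_subseq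
    (x := fun k (r : ℚ) => U k r) fun k r _ => (hU k).mem_Icc r
  let V : ℝ → ℝ := fun x => limsup (fun k => U (s k) x) atTop
  have hbdd : ∀ x, IsBoundedUnder (· ≤ ·) atTop fun k => U (s k) x := fun x =>
    isBoundedUnder_of ⟨1, fun k => ((hU _).mem_Icc x).2⟩
  have hcobdd : ∀ x, IsCoboundedUnder (· ≤ ·) atTop fun k => U (s k) x := fun x =>
    (isBoundedUnder_of ⟨0, fun k => ((hU _).mem_Icc x).1⟩ :
      IsBoundedUnder (· ≥ ·) atTop fun k => U (s k) x).isCoboundedUnder_le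
  have hmono : Monotone V := fun x y h =>
    limsup_le_limsup (.of_forall fun k => (hU (s k)).mono h) (hcobdd x) (hbdd y)
  have hmem : ∀ x, V x ∈ Set.Icc (0 : ℝ) 1 := fun x =>
    ⟨le_limsup_of_frequently_le (.of_forall fun k => ((hU (s k)).mem_Icc x).1) (hbdd x),
      limsup_le_of_le (hcobdd x) (.of_forall fun k => ((hU (s k)).mem_Icc x).2)⟩
  have hrat : ∀ r : ℚ, Tendsto (fun k => U (s k) r) atTop (𝓝 (V r)) := fun r => by
    have hr := tendsto_pi_nhds.1 hL r
    rwa [show V r = L r from hr.limsup_eq]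
  refine ⟨s, hs, V, ⟨hmono, hmem⟩, fun x hx y hy =>
    tendsto_order.2 ⟨fun a ha => ?_, fun a ha => ?_⟩⟩
  · obtain ⟨x₁, hx₁, hx₁a⟩ := (((hx.tendsto.eventually_const_lt ha).filter_mono
      nhdsWithin_le_nhds).and (self_mem_nhdsWithin (s := Set.Iio x))).exists.imp fun _ => And.symm
    obtain ⟨r, hr₁, hr₂⟩ := exists_rat_btwn hx₁
    filter_upwards [(hrat r).eventually_const_lt (hx₁a.trans_le (hmono hr₁.le)),
      hy.eventually_const_lt hr₂] with k hk hyk using hk.trans_le ((hU _).mono hyk.le)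
  · obtain ⟨x₁, hx₁, hx₁a⟩ := (((hx.tendsto.eventually_lt_const ha).filter_mono
      nhdsWithin_le_nhds).and (self_mem_nhdsWithin (s := Set.Ioi x))).exists.imp fun _ => And.symm
    obtain ⟨r, hr₁, hr₂⟩ := exists_rat_btwn hx₁
    filter_upwards [(hrat r).eventually_lt_const ((hmono hr₂.le).trans_lt hx₁a),
      hy.eventually_lt_const hr₁] with k hk hyk using ((hU _).mono hyk.le).trans_lt hk

/-- Exact waves of speed `ℓ`, with no condition on the limits at `±∞`. -/
structure IsWave (μ : Measure ℝ) (g : ℝ → ℝ) (ℓ : ℝ) (φ : ℝ → ℝ) : Prop extends IsProfile φ where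
  waveMap_eq : waveMap μ g ℓ φ = φ

section Limit

variable {μ : Measure ℝ} [IsProbabilityMeasure μ] [NullSingletonClass μ] {g : ℝ → ℝ} {θ c : ℝ}

theorem exists_isWave_of_tendsto (hg : IsBistable g θ) {G : ℕ → ℝ → ℝ} {ℓ ℓ' : ℕ → ℝ} {L : ℝ}
    {φ : ℕ → ℝ → ℝ} (hG : TendstoUniformlyOn G g atTop (Set.Icc 0 1))
    (hℓ : Tendsto ℓ atTop (𝓝 L)) (hℓ' : Tendsto ℓ' atTop (𝓝 L))
    (hφ : ∀ k, IsPseudoWave μ (G k) (ℓ k) (ℓ' k) (φ k)) (hc : ∀ k, movingAverage μ (φ k) 0 = c) :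
    ∃ ψ, IsWave μ g L ψ ∧ movingAverage μ ψ 0 = c := by
  obtain ⟨s, hs, Φ, hΦ, hlim⟩ :=
    exists_subseq_tendsto_of_continuousAt fun k => (hφ k).toIsProfile
  have hφs : ∀ k, IsProfile (φ (s k)) := fun k => (hφ (s k)).toIsProfile
  have havg : ∀ x (y : ℕ → ℝ), Tendsto y atTop (𝓝 x) →
      Tendsto (fun k => movingAverage μ (φ (s k)) (y k)) atTop (𝓝 (movingAverage μ Φ x)) :=
    fun x y hy => tendsto_movingAverage hφs <| (hΦ.ae_continuousAt_sub μ x).mono fun z hz =>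
      hlim _ hz _ (hy.sub_const z)
  have hGs : TendstoUniformlyOn (fun k => G (s k)) g atTop (Set.Icc 0 1) := fun u hu =>
    hs.tendsto_atTop.eventually (hG u hu)
  have hmap : ∀ x (m : ℕ → ℝ), Tendsto m atTop (𝓝 L) →
      Tendsto (fun k => waveMap μ (G (s k)) (m (s k)) (φ (s k)) x) atTop
        (𝓝 (waveMap μ g L Φ x)) := fun x m hm => by
    have hy := havg (x + L) _ ((hm.comp hs.tendsto_atTop).const_add x)
    exact hGs.tendsto_comp (hg.continuousOn _ (hΦ.movingAverage.mem_Icc _))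
      (tendsto_nhdsWithin_iff.2 ⟨hy, .of_forall fun k => (hφs k).movingAverage.mem_Icc _⟩)
  have hψ : ∀ x, Tendsto (fun k => φ (s k) x) atTop (𝓝 (waveMap μ g L Φ x)) := fun x =>
    tendsto_of_tendsto_of_tendsto_of_le_of_le (hmap x ℓ hℓ) (hmap x ℓ' hℓ')
      (fun k => (hφ (s k)).waveMap_le x) (fun k => (hφ (s k)).le_waveMap x)
  have heq : movingAverage μ (waveMap μ g L Φ) = movingAverage μ Φ := funext fun x =>
    tendsto_nhds_unique (tendsto_movingAverage hφs (.of_forall fun _ => hψ _))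
      (havg x _ tendsto_const_nhds)
  refine ⟨waveMap μ g L Φ, ⟨hΦ.waveMap hg L, funext fun x => ?_⟩, ?_⟩
  · rw [waveMap, heq, waveMap]
  · rw [heq]
    exact tendsto_nhds_unique (havg 0 _ tendsto_const_nhds) (by simp [hc])

end Limit

/-! ### Flattening the nonlinearity near the stable states -/

/-- The nonlinearity stretched away from its unstable fixed point `θ` by the factor `1 + d` and
truncated to `[0, 1]`; for `d > 0` it is constant near `0` and near `1`. -/
def amplify (g : ℝ → ℝ) (θ d x : ℝ) : ℝ := max 0 (min 1 (θ + (1 + d) * (g x - θ)))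

section Amplify

variable {g : ℝ → ℝ} {θ d x : ℝ}

theorem IsBistable.amplify (hg : IsBistable g θ) (hd : 0 ≤ d) : IsBistable (amplify g θ d) θ where
  continuousOn := continuousOn_const.sup <| continuousOn_const.inf <| continuousOn_const.add <|
    continuousOn_const.mul <| hg.continuousOn.sub continuousOn_const
  monotoneOn x hx y hy h := by
    have := hg.monotoneOn hx hy h
    unfold _root_.amplify
    gcongr
  map_zero := by
    rw [_root_.amplify, hg.map_zero]
    exact max_eq_left (min_le_of_right_le (by nlinarith [hg.mem_Ioo.1]))
  map_one := by
    rw [_root_.amplify, hg.map_one, min_eq_left (by nlinarith [hg.mem_Ioo.2]),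
      max_eq_right zero_le_one]
  mem_Ioo := hg.mem_Ioo
  map_threshold := by
    rw [_root_.amplify, hg.map_threshold, sub_self, mul_zero, add_zero,
      min_eq_right hg.mem_Ioo.2.le, max_eq_right hg.mem_Ioo.1.le]
  lt_self x hx := by
    have := hg.lt_self x hx
    exact max_lt hx.1 (min_lt_of_right_lt (by nlinarith [hx.2]))
  self_lt x hx := by
    have := hg.self_lt x hx
    exact lt_max_of_lt_right (lt_min hx.2 (by nlinarith [hx.1]))

theorem eventually_amplify_eq_zero (hg : IsBistable g θ) (hd : 0 < d) :
    ∀ᶠ x in 𝓝[≥] 0, amplify g θ d x = 0 := by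
  have hcont : Tendsto (fun x => θ + (1 + d) * (g x - θ)) (𝓝[≥] 0) (𝓝 (θ + (1 + d) * (0 - θ))) := by
    have h := (hg.continuousOn 0 (Set.left_mem_Icc.2 zero_le_one)).tendsto
    rw [nhdsWithin_Icc_eq_nhdsGE zero_lt_one, hg.map_zero] at h
    exact ((h.sub_const θ).const_mul _).const_add θ
  filter_upwards [hcont.eventually_lt_const (u := 0) (by nlinarith [hg.mem_Ioo.1])] with x hx
  exact max_eq_left (min_le_of_right_le hx.le)

theorem eventually_amplify_eq_one (hg : IsBistable g θ) (hd : 0 < d) :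
    ∀ᶠ x in 𝓝[≤] 1, amplify g θ d x = 1 := by
  have hcont : Tendsto (fun x => θ + (1 + d) * (g x - θ)) (𝓝[≤] 1) (𝓝 (θ + (1 + d) * (1 - θ))) := by
    have h := (hg.continuousOn 1 (Set.right_mem_Icc.2 zero_le_one)).tendsto
    rw [nhdsWithin_Icc_eq_nhdsLE zero_lt_one, hg.map_one] at h
    exact ((h.sub_const θ).const_mul _).const_add θ
  filter_upwards [hcont.eventually_const_lt (u := 1) (by nlinarith [hg.mem_Ioo.2])] with x hx
  rw [amplify, min_eq_left hx.le, max_eq_right zero_le_one]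

theorem abs_amplify_sub_le (hg : IsBistable g θ) (hx : x ∈ Set.Icc (0 : ℝ) 1) :
    |amplify g θ d x - g x| ≤ |d| := by
  have hgx := hg.map_mem_Icc hx
  calc |amplify g θ d x - g x|
      = |max 0 (min 1 (θ + (1 + d) * (g x - θ))) - max 0 (min 1 (g x))| := by
        rw [min_eq_right hgx.2, max_eq_right hgx.1, amplify]
    _ ≤ |min 1 (θ + (1 + d) * (g x - θ)) - min 1 (g x)| := by
        simpa using abs_max_sub_max_le_max 0 (min 1 (θ + (1 + d) * (g x - θ))) 0 (min 1 (g x))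
    _ ≤ |θ + (1 + d) * (g x - θ) - g x| := by
        simpa using abs_min_sub_min_le_max 1 (θ + (1 + d) * (g x - θ)) 1 (g x)
    _ = |d| * |g x - θ| := by
        rw [← abs_mul]
        congr 1
        ring
    _ ≤ |d| := mul_le_of_le_one_right (abs_nonneg d) <|
        abs_sub_le_iff.2 ⟨by linarith [hgx.2, hg.mem_Ioo.1], by linarith [hgx.1, hg.mem_Ioo.2]⟩

theorem tendstoUniformlyOn_amplify (hg : IsBistable g θ) {ε : ℕ → ℝ}
    (hε : Tendsto ε atTop (𝓝 0)) :
    TendstoUniformlyOn (fun k => amplify g θ (ε k)) g atTop (Set.Icc 0 1) := by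
  refine Metric.tendstoUniformlyOn_iff.2 fun δ hδ => ?_
  filter_upwards [(tendsto_zero_iff_abs_tendsto_zero _).1 hε |>.eventually_lt_const hδ]
    with k hk x hx
  rw [dist_comm, Real.dist_eq]
  exact (abs_amplify_sub_le hg hx).trans_lt hk

end Amplify

/-! ### Existence of fronts -/

/-- A wave connecting the stable states `0` and `1`. -/
structure IsFront (μ : Measure ℝ) (g : ℝ → ℝ) (ℓ : ℝ) (φ : ℝ → ℝ) : Prop extends
    IsWave μ g ℓ φ where
  tendsto_atBot : Tendsto φ atBot (𝓝 0)
  tendsto_atTop : Tendsto φ atTop (𝓝 1)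

section Front

variable {μ : Measure ℝ} [IsProbabilityMeasure μ] {g φ : ℝ → ℝ} {θ ℓ R a : ℝ}

theorem IsWave.reflect (hφ : IsWave μ g ℓ φ) : IsWave μ.neg (dual g) (-ℓ) (reflect φ) where
  toIsProfile := hφ.toIsProfile.reflect
  waveMap_eq := by rw [waveMap_neg_reflect hφ.toIsProfile, hφ.waveMap_eq]

theorem IsFront.reflect (hφ : IsFront μ g ℓ φ) : IsFront μ.neg (dual g) (-ℓ) (reflect φ) where
  toIsWave := hφ.toIsWave.reflect
  tendsto_atBot := by simpa using tendsto_reflect_atBot hφ.tendsto_atTop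
  tendsto_atTop := by simpa using tendsto_reflect_atTop hφ.tendsto_atBot

theorem isFront_neg_dual_reflect_iff :
    IsFront μ.neg (dual g) (-ℓ) (reflect φ) ↔ IsFront μ g ℓ φ :=
  ⟨fun h => by simpa [Measure.neg_neg, dual_dual, reflect_reflect] using h.reflect, (·.reflect)⟩

theorem IsWave.map_eq_of_tendsto_atBot (hg : IsBistable g θ) (hφ : IsWave μ g ℓ φ)
    (ha : Tendsto φ atBot (𝓝 a)) : g a = a :=
  tendsto_nhds_unique (tendsto_waveMap_atBot hg hφ.toIsProfile ha) (by rwa [hφ.waveMap_eq])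

theorem IsWave.map_eq_of_tendsto_atTop (hg : IsBistable g θ) (hφ : IsWave μ g ℓ φ)
    (ha : Tendsto φ atTop (𝓝 a)) : g a = a :=
  tendsto_nhds_unique (tendsto_waveMap_atTop hg hφ.toIsProfile ha) (by rwa [hφ.waveMap_eq])

variable [NullSingletonClass μ]

theorem exists_speed_forall_exists_isWave (hR : ∀ᵐ z ∂μ, |z| ≤ R) (hg : IsBistable g θ) :
    ∃ L, ∀ c ∈ Set.Ioo (0 : ℝ) 1, ∃ ψ, IsWave μ g L ψ ∧ movingAverage μ ψ 0 = c := by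
  let ε : ℕ → ℝ := fun k => 1 / ((k : ℝ) + 1)
  have hε : ∀ k, 0 < ε k := fun _ => Nat.one_div_pos_of_nat
  have hlim : Tendsto ε atTop (𝓝 0) := tendsto_one_div_add_atTop_nhds_zero_nat
  have hG : ∀ k, IsBistable (amplify g θ (ε k)) θ := fun k => hg.amplify (hε k).le
  choose ℓ hℓ ℓ' hℓ' hsup hsub using fun k =>
    exists_hasSupersolution_hasSubsolution hR (hG k) (eventually_amplify_eq_zero hg (hε k))
      (eventually_amplify_eq_one hg (hε k)) (hε k)
  obtain ⟨L, -, s, hs, hL⟩ := isCompact_Icc.tendsto_subseq hℓ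
  have hεs : Tendsto (ε ∘ s) atTop (𝓝 0) := hlim.comp hs.tendsto_atTop
  have hL' : Tendsto (ℓ' ∘ s) atTop (𝓝 L) :=
    tendsto_of_tendsto_of_tendsto_of_le_of_le hL (by simpa using hL.add hεs)
      (fun k => (hℓ' (s k)).1) fun k => (hℓ' (s k)).2
  refine ⟨L, fun c hc => ?_⟩
  choose φ hφ hφc using fun k =>
    exists_isPseudoWave_movingAverage_eq (hG (s k)) (hℓ' (s k)).1 (hsup (s k)) (hsub (s k)) hc
  exact exists_isWave_of_tendsto hg (tendstoUniformlyOn_amplify hg hεs) hL hL' hφ hφc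

theorem IsWave.isFront_or_speed_lt_mean (hμ : Integrable (fun z => z) μ) (hg : IsBistable g θ)
    (hφ : IsWave μ g ℓ φ) (hc : ∃ x, movingAverage μ φ x ∈ Set.Ioo θ 1) :
    IsFront μ g ℓ φ ∨ ℓ < ∫ z, z ∂μ := by
  obtain ⟨x, hx⟩ := hc
  have hprof : IsProfile φ := hφ.toIsProfile
  obtain ⟨a, ha⟩ := hprof.exists_tendsto_atBot
  obtain ⟨b, hb⟩ := hprof.exists_tendsto_atTop
  have hle : ∀ y, a ≤ movingAverage μ φ y := fun y =>
    le_movingAverage hprof (.of_forall fun _ => hprof.mono.le_of_tendsto ha _)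
  have hge : movingAverage μ φ x ≤ b :=
    movingAverage_le hprof (.of_forall fun _ => hprof.mono.ge_of_tendsto hb _)
  obtain rfl : b = 1 := by
    rcases hg.eq_of_map_eq_self (hprof.mem_Icc_of_tendsto hb) (hφ.map_eq_of_tendsto_atTop hg hb)
      with h | h | h <;> linarith [hx.1, hg.mem_Ioo.1]
  rcases hg.eq_of_map_eq_self (hprof.mem_Icc_of_tendsto ha) (hφ.map_eq_of_tendsto_atBot hg ha)
    with rfl | rfl | rfl
  · exact .inl ⟨hφ, ha, hb⟩
  · have hwave : ∀ y, g (movingAverage μ φ (y + ℓ)) = φ y := congr_fun hφ.waveMap_eq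
    refine .inr (speed_lt_mean hμ hprof (hφ.waveMap_eq ▸ continuous_waveMap hg hprof) ha hb
      (fun y => ?_) ⟨x - ℓ, ?_⟩)
    · exact (hg.self_le ⟨hle _, (hprof.movingAverage.mem_Icc _).2⟩).trans_eq (hwave y)
    · rw [← hwave, sub_add_cancel]
      exact hg.self_lt _ hx
  · exact absurd (hle x) hx.2.not_ge

theorem IsWave.isFront_or_mean_lt_speed (hμ : Integrable (fun z => z) μ) (hg : IsBistable g θ)
    (hφ : IsWave μ g ℓ φ) (hc : ∃ x, movingAverage μ φ x ∈ Set.Ioo 0 θ) :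
    IsFront μ g ℓ φ ∨ ∫ z, z ∂μ < ℓ := by
  obtain ⟨x, hx⟩ := hc
  have hμ' : Integrable (fun z => z) μ.neg :=
    (MeasurableEquiv.neg ℝ).measurableEmbedding.integrable_map_iff.2 hμ.neg
  have hc' : movingAverage μ.neg (_root_.reflect φ) (-x) ∈ Set.Ioo (1 - θ) 1 := by
    rw [movingAverage_neg_reflect hφ.toIsProfile, neg_neg]
    exact ⟨sub_lt_sub_left hx.2 1, sub_lt_self 1 hx.1⟩
  refine (hφ.reflect.isFront_or_speed_lt_mean hμ' hg.dual ⟨_, hc'⟩).imp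
    isFront_neg_dual_reflect_iff.1 fun h => ?_
  rw [integral_measure_neg, integral_neg] at h
  exact neg_lt_neg_iff.1 h

theorem traveling_wave_exists_general (hR : ∀ᵐ z ∂μ, |z| ≤ R) (hg : IsBistable g θ) :
    ∃ ℓ φ, IsFront μ g ℓ φ := by
  have hμ : Integrable (fun z => z) μ := integrable_id_of_ae_abs_le hR
  obtain ⟨hθ₀, hθ₁⟩ := hg.mem_Ioo
  obtain ⟨L, hL⟩ := exists_speed_forall_exists_isWave hR hg
  obtain ⟨φ₁, hφ₁, hc₁⟩ := hL (θ / 2) ⟨by linarith, by linarith⟩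
  obtain ⟨φ₂, hφ₂, hc₂⟩ := hL ((1 + θ) / 2) ⟨by linarith, by linarith⟩
  rcases hφ₁.isFront_or_mean_lt_speed hμ hg ⟨0, hc₁ ▸ ⟨by linarith, by linarith⟩⟩ with h₁ | h₁
  · exact ⟨L, φ₁, h₁⟩
  rcases hφ₂.isFront_or_speed_lt_mean hμ hg ⟨0, hc₂ ▸ ⟨by linarith, by linarith⟩⟩ with h₂ | h₂
  · exact ⟨L, φ₂, h₂⟩
  exact absurd h₁ h₂.not_gt

end Front

/-! ### The polynomial bistable setting -/

theorem lt_self_of_hasDerivWithinAt_lt_one {f : ℝ → ℝ} {f' a b : ℝ}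
    (hcont : ContinuousOn f (Set.Ioo a b)) (hderiv : HasDerivWithinAt f f' (Set.Ioi a) a)
    (hf' : f' < 1) (ha : f a = a) (hfix : ∀ x ∈ Set.Ioo a b, f x ≠ x) {x : ℝ}
    (hx : x ∈ Set.Ioo a b) : f x < x := by
  have hslope : Tendsto (slope f a) (𝓝[>] a) (𝓝 f') :=
    (hasDerivWithinAt_iff_tendsto_slope' Set.self_notMem_Ioi).1 hderiv
  have hnear : ∀ᶠ y in 𝓝[>] a, f y < y := by
    filter_upwards [hslope.eventually_lt_const hf', self_mem_nhdsWithin] with y hy hay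
    rw [slope_def_field, ha, div_lt_one (sub_pos.2 hay)] at hy
    exact (sub_lt_sub_iff_right a).1 hy
  obtain ⟨y, hy, hya, hyx⟩ := (hnear.and (Ioo_mem_nhdsGT hx.1)).exists
  by_contra! hle
  have hsub : Set.Icc y x ⊆ Set.Ioo a b := Set.Icc_subset_Ioo hya hx.2
  obtain ⟨z, hz, hfz⟩ := intermediate_value_Icc hyx.le
    ((hcont.mono hsub).sub continuousOn_id) ⟨(sub_neg.2 hy).le, sub_nonneg.2 hle⟩
  exact hfix z (hsub hz) (sub_eq_zero.1 hfz)

theorem hasDerivAt_dual {f : ℝ → ℝ} {f' : ℝ} (h : HasDerivAt f f' 1) :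
    HasDerivAt (dual f) f' 0 := by
  rw [← sub_zero 1] at h
  change HasDerivAt (fun x => 1 - f (1 - x)) f' 0
  simpa using (h.comp_const_sub 1 0).const_sub 1

theorem conv_qshift (q u : ℝ → ℝ) (ℓ x : ℝ) : conv (qshift q ℓ) u x = conv q u (x + ℓ) := by
  rw [conv, conv, ← integral_add_right_eq_self (fun y => q y * u (x + ℓ - y)) ℓ]
  simp only [qshift, add_sub_add_right_eq_sub]

theorem contDiff_conv {q u : ℝ → ℝ} {n : ℕ∞} (hq : HasCompactSupport q) (hqn : ContDiff ℝ n q)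
    (hu : LocallyIntegrable u) : ContDiff ℝ n (conv q u) :=
  hq.contDiff_convolution_left (ContinuousLinearMap.mul ℝ ℝ) hqn hu

namespace BistableSetting

variable (S : BistableSetting) {φ u : ℝ → ℝ} {ℓ x : ℝ}

theorem monotoneOn_eval : MonotoneOn (fun x => S.P.eval x) (Set.Icc 0 1) :=
  monotoneOn_of_deriv_nonneg (convex_Icc 0 1) S.P.continuous.continuousOn
    S.P.differentiable.differentiableOn fun x hx => by
      rw [interior_Icc] at hx
      rw [Polynomial.deriv]
      exact (S.hP_mono x hx).le

theorem eval_lt_self (hx : x ∈ Set.Ioo 0 S.θ) : S.P.eval x < x :=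
  lt_self_of_hasDerivWithinAt_lt_one S.P.continuous.continuousOn
    (S.P.hasDerivAt 0).hasDerivWithinAt S.hf'0 S.hP0
    (fun y hy h => hy.2.ne (S.hθ_unique y ⟨hy.1, hy.2.trans S.hθ_mem.2⟩ h)) hx

theorem self_lt_eval (hx : x ∈ Set.Ioo S.θ 1) : x < S.P.eval x := by
  have hcont : Continuous (dual fun x => S.P.eval x) :=
    continuous_const.sub (S.P.continuous.comp (by fun_prop))
  have hfix : ∀ y ∈ Set.Ioo 0 (1 - S.θ), dual (fun x => S.P.eval x) y ≠ y := fun y hy h =>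
    (lt_sub_comm.1 hy.2).ne' <| S.hθ_unique (1 - y)
      ⟨S.hθ_mem.1.trans (lt_sub_comm.1 hy.2), sub_lt_self 1 hy.1⟩ <| by
        simp only [dual] at h
        linarith
  have h := lt_self_of_hasDerivWithinAt_lt_one hcont.continuousOn
    (hasDerivAt_dual (S.P.hasDerivAt 1)).hasDerivWithinAt S.hf'1 (by simp [dual, S.hP1]) hfix
    (x := 1 - x) ⟨sub_pos.2 hx.2, sub_lt_sub_left hx.1 1⟩
  simpa [dual] using h

theorem g_eq_eval (hx : x ∈ Set.Icc (0 : ℝ) 1) : S.g x = S.P.eval x := by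
  rw [g, if_neg hx.1.not_gt, if_pos hx.2]

theorem isBistable : IsBistable (fun x => S.P.eval x) S.θ where
  continuousOn := S.P.continuous.continuousOn
  monotoneOn := S.monotoneOn_eval
  map_zero := S.hP0
  map_one := S.hP1
  mem_Ioo := S.hθ_mem
  map_threshold := S.hθ_zero
  lt_self _ := S.eval_lt_self
  self_lt _ := S.self_lt_eval

/-- The probability measure with density `q`. -/
noncomputable def kernel : Measure ℝ := volume.withDensity fun z => ENNReal.ofReal (S.q z)

theorem measurable_density : Measurable fun z => ENNReal.ofReal (S.q z) :=
  S.hq_diff.continuous.measurable.ennreal_ofReal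

instance isProbabilityMeasure_kernel : IsProbabilityMeasure S.kernel where
  measure_univ := by
    have hint : Integrable S.q :=
      S.hq_diff.continuous.integrable_of_hasCompactSupport S.hq_supp
    rw [kernel, withDensity_apply _ .univ, setLIntegral_univ,
      ← ofReal_integral_eq_lintegral_ofReal hint (.of_forall S.hq_nonneg), S.hq_int,
      ENNReal.ofReal_one]

instance nullSingletonClass_kernel : NullSingletonClass S.kernel :=
  inferInstanceAs (NullSingletonClass (volume.withDensity _))

theorem exists_ae_kernel_abs_le : ∃ R, ∀ᵐ z ∂S.kernel, |z| ≤ R := by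
  obtain ⟨R, hR⟩ := S.hq_supp.isCompact.isBounded.subset_closedBall 0
  refine ⟨R, (ae_withDensity_iff S.measurable_density).2 (.of_forall fun z hz => ?_)⟩
  have hqz : S.q z ≠ 0 := fun h => hz (by rw [h, ENNReal.ofReal_zero])
  exact mem_closedBall_zero_iff.1 (hR (subset_tsupport _ hqz))

theorem movingAverage_kernel (u : ℝ → ℝ) : movingAverage S.kernel u = conv S.q u := by
  ext x
  rw [movingAverage, kernel,
    integral_withDensity_eq_integral_toReal_smul S.measurable_density (by simp)]
  simp [conv, ENNReal.toReal_ofReal (S.hq_nonneg _)]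

theorem isTravelingWave_of_isFront (h : IsFront S.kernel (fun x => S.P.eval x) ℓ φ) :
    IsTravelingWave S ℓ φ where
  mono := h.mono
  smooth := by
    have hconv : ContDiff ℝ 1 (movingAverage S.kernel φ) := S.movingAverage_kernel φ ▸
      contDiff_conv S.hq_supp S.hq_diff h.mono.locallyIntegrable
    have heval : ContDiff ℝ 1 fun x => S.P.eval x := by simpa using S.P.contDiff_aeval (𝕜 := ℝ) 1
    rw [← h.waveMap_eq]
    exact heval.comp (hconv.comp (contDiff_id.add contDiff_const))
  wave_eq x := by
    conv_lhs => rw [← h.waveMap_eq]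
    rw [conv_qshift, ← S.movingAverage_kernel,
      S.g_eq_eval (h.toIsProfile.movingAverage.mem_Icc _), waveMap]
  limit_bot := h.tendsto_atBot
  limit_top := h.tendsto_atTop

end BistableSetting

/-- Existence of a traveling wave in the bistable case. -/
theorem traveling_wave_exists (S : BistableSetting) :
    ∃ (ℓ : ℝ) (φ : ℝ → ℝ), IsTravelingWave S ℓ φ := by
  obtain ⟨R, hR⟩ := S.exists_ae_kernel_abs_le
  obtain ⟨ℓ, φ, hφ⟩ := traveling_wave_exists_general hR S.isBistable
  exact ⟨ℓ, φ, S.isTravelingWave_of_isFront hφ⟩
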